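/- arXiv:1410.7501 — 12 statements merged into one kernel-verified Lean document; each statement's English description precedes it below -/
import Mathlib

section
/- There is no finite groupoid that is k-antiassociative for all k ≥ 3: for every finite groupoid G there exist k ≥ 3, two distinct ordered terms s and t on x₁,…,x_k, and elements a₁,…,a_k ∈ G with s(a₁,…,a_k) = t(a₁,…,a_k). -/
/-- Evaluation of a groupoid term in a groupoid `⟨G, op⟩` under the assignment `f`. -/
def evalWith {α G : Type*} (op : G → G → G) (f : α → G) : FreeMagma α → G
  | .of a => f a
  | .mul s t => op (evalWith op f s) (evalWith op f t)

/-- The list of variable occurrences of a term, from left to right. -/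
def varList {α : Type*} : FreeMagma α → List α
  | .of a => [a]
  | .mul s t => varList s ++ varList t

/-- An ordered term on `x₁, …, x_k`: each variable occurs exactly once, in order. -/
def IsOrderedTerm {k : ℕ} (t : FreeMagma (Fin k)) : Prop :=
  varList t = List.finRange k

/-- Every nonempty list is the variable list of some term. -/
theorem exists_term_varList {α : Type*} (l : List α) (hl : l ≠ []) :
    ∃ t : FreeMagma α, varList t = l := by
  induction l with
  | nil => exact absurd rfl hl
  | cons a l ih =>
    by_cases h : l = []
    · subst h
      exact ⟨.of a, rfl⟩
    · obtain ⟨t, ht⟩ := ih h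
      exact ⟨.mul (.of a) t, by simp [varList, ht]⟩

/-- No finite (nonempty) groupoid is `k`-antiassociative for all `k ≥ 3`:
for every finite groupoid `⟨G, op⟩` there exist `k ≥ 3`, two distinct ordered terms
`s` and `t` on `x₁, …, x_k`, and elements `a₁, …, a_k ∈ G` (an assignment `f`) with
`s(a₁,…,a_k) = t(a₁,…,a_k)`. -/
theorem no_finite_groupoid_always_antiassociative {G : Type*} [Finite G] [Nonempty G]
    (op : G → G → G) :
    ∃ k : ℕ, 3 ≤ k ∧ ∃ s t : FreeMagma (Fin k),
      IsOrderedTerm s ∧ IsOrderedTerm t ∧ s ≠ t ∧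
      ∃ f : Fin k → G, evalWith op f s = evalWith op f t := by
  obtain ⟨g⟩ := ‹Nonempty G›
  let n := Nat.card G
  have h1 : ∀ i : Fin (n + 1), ∃ t : FreeMagma (Fin (n + 3)),
      varList t = (List.finRange (n + 3)).take (i + 1) := fun i =>
    exists_term_varList _ (by
      intro h
      have := congrArg List.length h
      simp at this)
  have h2 : ∀ i : Fin (n + 1), ∃ t : FreeMagma (Fin (n + 3)),
      varList t = (List.finRange (n + 3)).drop (i + 1) := fun i =>
    exists_term_varList _ (by
      intro h
      have := congrArg List.length h
      simp only [List.length_drop, List.length_finRange, List.length_nil] at this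
      omega)
  choose p hp using h1
  choose q hq using h2
  have hord : ∀ i, IsOrderedTerm (FreeMagma.mul (p i) (q i)) := fun i => by
    simp only [IsOrderedTerm, varList, hp, hq, List.take_append_drop]
  obtain ⟨i, j, hij, he⟩ : ∃ i j, i ≠ j ∧
      evalWith op (fun _ => g) (FreeMagma.mul (p i) (q i)) =
      evalWith op (fun _ => g) (FreeMagma.mul (p j) (q j)) := by
    by_contra! hc
    have hinj : Function.Injective
        (fun i => evalWith op (fun _ => g) (FreeMagma.mul (p i) (q i))) := by
      intro i j h
      by_contra hne
      exact hc i j hne h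
    have := Nat.card_le_card_of_injective _ hinj
    simp only [Nat.card_eq_fintype_card, Fintype.card_fin] at this
    omega
  refine ⟨n + 3, by omega, _, _, hord i, hord j, ?_, fun _ => g, he⟩
  intro h
  injection h with ha hb
  have hl := congrArg (fun t => (varList t).length) ha
  simp only [hp, List.length_take, List.length_finRange] at hl
  apply hij
  ext
  omega
end

section
/- Whenever 3 ≤ j < k, a groupoid ⟨G, ⋆⟩ that is k-antiassociative is also j-antiassociative. -/
/-- The groupoid `⟨G, op⟩` separates the terms `s` and `t`. -/
def Separates {α G : Type*} (op : G → G → G) (s t : FreeMagma α) : Prop :=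
  ∀ f : α → G, evalWith op f s ≠ evalWith op f t

/-- The groupoid `⟨G, op⟩` is `k`-antiassociative. -/
def KAntiassociative (k : ℕ) {G : Type*} (op : G → G → G) : Prop :=
  ∀ s t : FreeMagma (Fin k), IsOrderedTerm s → IsOrderedTerm t → s ≠ t → Separates op s t

/-- Renaming of variables. -/
def renTerm {α β : Type*} (g : α → β) : FreeMagma α → FreeMagma β
  | .of a => .of (g a)
  | .mul s t => .mul (renTerm g s) (renTerm g t)

theorem renTerm_inj {α β : Type*} {g : α → β} (hg : Function.Injective g) :
    ∀ s t : FreeMagma α, renTerm g s = renTerm g t → s = t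
  | .of a, .of b, h => by
      simp only [renTerm] at h
      injection h with h1
      rw [hg h1]
  | .of a, .mul s t, h => by simp [renTerm] at h
  | .mul s t, .of a, h => by simp [renTerm] at h
  | .mul s t, .mul s' t', h => by
      simp only [renTerm] at h
      injection h with h1 h2
      rw [renTerm_inj hg s s' h1, renTerm_inj hg t t' h2]

theorem varList_renTerm {α β : Type*} (g : α → β) :
    ∀ s : FreeMagma α, varList (renTerm g s) = (varList s).map g
  | .of a => by simp [renTerm, varList]
  | .mul s t => by
      simp only [renTerm, varList, List.map_append]
      rw [varList_renTerm g s, varList_renTerm g t]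

theorem evalWith_renTerm {α β G : Type*} (op : G → G → G) (g : α → β) (f : β → G) :
    ∀ s : FreeMagma α, evalWith op f (renTerm g s) = evalWith op (f ∘ g) s
  | .of a => by simp [renTerm, evalWith]
  | .mul s t => by
      simp only [renTerm, evalWith]
      rw [evalWith_renTerm op g f s, evalWith_renTerm op g f t]

theorem kAnti_pred {G : Type*} (op : G → G → G) (n : ℕ) (hn : 0 < n)
    (h : KAntiassociative (n + 1) op) : KAntiassociative n op := by
  intro s t hs ht hst f heq
  have key : ∀ u : FreeMagma (Fin n), IsOrderedTerm u →
      IsOrderedTerm (.mul (renTerm Fin.castSucc u) (.of (Fin.last n))) := by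
    intro u hu
    unfold IsOrderedTerm at *
    simp only [varList]
    rw [varList_renTerm, hu, List.finRange_succ_last]
  refine h _ _ (key s hs) (key t ht) ?_ (Fin.snoc (α := fun _ => G) f (f ⟨0, hn⟩)) ?_
  · intro e
    injection e with e1 e2
    exact hst (renTerm_inj (Fin.castSucc_injective n) s t e1)
  · have hf : (Fin.snoc (α := fun _ => G) f (f ⟨0, hn⟩) : Fin (n + 1) → G) ∘ Fin.castSucc = f := by
      funext i
      simp
    simp only [evalWith]
    rw [evalWith_renTerm, evalWith_renTerm, hf, heq]

/-- Whenever `3 ≤ j < k`, a groupoid that is `k`-antiassociative is also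
`j`-antiassociative. -/
theorem kAntiassociative_implies_jAntiassociative {G : Type*} (op : G → G → G)
    (j k : ℕ) (hj : 3 ≤ j) (hjk : j < k)
    (hk : KAntiassociative k op) : KAntiassociative j op := by
  obtain ⟨d, rfl⟩ := Nat.exists_eq_add_of_lt hjk
  clear hjk
  induction d with
  | zero => exact kAnti_pred op j (by omega) hk
  | succ d ih => exact ih (kAnti_pred op (j + d + 1) (by omega) hk)
end

section
/- Consider the groupoid ⟨Z₃, ⊙⟩ with operation x ⊙ y = (y + 1) mod 3. For every groupoid term t and every assignment of values in Z₃ to its variables, the value of t equals (z + n) mod 3, where z is the value assigned to the rightmost variable occurrence of t and n is the depth of that occurrence in t (the length of its path in the tree T(t)). -/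
/-- The variable at the rightmost leaf of (the tree of) a term. -/
def rightVar {α : Type*} : FreeMagma α → α
  | .of a => a
  | .mul _ t => rightVar t

/-- The path (a string over `{l, r}`, here `false = l`, `true = r`, read from the root)
of the rightmost variable occurrence of a term; it lies in `{r}*`, and its length is
the depth of that occurrence. -/
def rightPath {α : Type*} : FreeMagma α → List Bool
  | .of _ => []
  | .mul _ t => true :: rightPath t

/-- In the groupoid `⟨Z₃, ⊙⟩` with `x ⊙ y = (y + 1) mod 3`, the value of
any term `t` equals `(z + n) mod 3`, where `z` is the value assigned to the rightmost
variable occurrence of `t` and `n` is the depth of that occurrence in `t`. -/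
theorem rightDeranged_value {α : Type*} (t : FreeMagma α) (f : α → ZMod 3) :
    evalWith (fun _ y => y + 1) f t = f (rightVar t) + ((rightPath t).length : ZMod 3) := by
  induction t using FreeMagma.rec with
  | of a => simp [evalWith, rightVar, rightPath]
  | mul s t _ ih =>
    simp only [evalWith, rightVar, rightPath, List.length_cons, Nat.cast_add, Nat.cast_one]
    rw [ih, add_assoc]
end

section
/- Let ⊙₂ be the operation on Z₂ given by x ⊙₂ y = (x + 1) mod 2, and let ⊙₃ be the operation on Z₃ given by x ⊙₃ y = (y + 1) mod 3. Then the product groupoid on Z₂ × Z₃, with componentwise operation (a,b) ⋆ (c,d) = (a ⊙₂ c, b ⊙₃ d) = ((a+1) mod 2, (d+1) mod 3), is 4-antiassociative: it separates every pair of distinct terms among the five 4-ary ordered terms ((x₁⋆x₂)⋆x₃)⋆x₄, (x₁⋆(x₂⋆x₃))⋆x₄, (x₁⋆x₂)⋆(x₃⋆x₄), x₁⋆((x₂⋆x₃)⋆x₄), and x₁⋆(x₂⋆(x₃⋆x₄)). -/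
/-- The product groupoid on `Z₂ × Z₃` of `x ⊙₂ y = (x+1) mod 2` and
`x ⊙₃ y = (y+1) mod 3`, i.e. `(a,b) ⋆ (c,d) = ((a+1) mod 2, (d+1) mod 3)`, is
4-antiassociative: it separates every pair of distinct terms among the five
4-ary ordered terms. -/
theorem prod_Z2_Z3_four_antiassociative :
    let op : ZMod 2 × ZMod 3 → ZMod 2 × ZMod 3 → ZMod 2 × ZMod 3 :=
      fun p q => (p.1 + 1, q.2 + 1)
    let x : Fin 4 → FreeMagma (Fin 4) := FreeMagma.of
    let L : List (FreeMagma (Fin 4)) :=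
      [((x 0 * x 1) * x 2) * x 3,
       (x 0 * (x 1 * x 2)) * x 3,
       (x 0 * x 1) * (x 2 * x 3),
       x 0 * ((x 1 * x 2) * x 3),
       x 0 * (x 1 * (x 2 * x 3))]
    ∀ s ∈ L, ∀ t ∈ L, s ≠ t → Separates op s t := by
  intro op x L s hs t ht hne f
  have hm : ∀ a b : FreeMagma (Fin 4),
      evalWith op f (a * b) = ((evalWith op f a).1 + 1, (evalWith op f b).2 + 1) :=
    fun _ _ => rfl
  have ho : ∀ i : Fin 4, evalWith op f (x i) = f i := fun _ => rfl
  simp only [L, List.mem_cons, List.not_mem_nil, or_false] at hs ht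
  rcases hs with rfl | rfl | rfl | rfl | rfl <;>
    rcases ht with rfl | rfl | rfl | rfl | rfl <;>
    first
    | exact absurd rfl hne
    | (simp only [hm, ho, ne_eq, Prod.mk.injEq]
       generalize (f 0).1 = a
       generalize (f 3).2 = b
       clear hne hm ho
       revert a b
       decide)
end

section
/- Let A be the abelian group of 2×3 matrices over Z₂ (so |A| = 64). Let α be the endomorphism of A that copies the left column onto the middle column and the middle column onto the right column (α(M) has columns M₍·,1₎, M₍·,1₎, M₍·,2₎), let β be the endomorphism that copies the top row onto the bottom row (β(M) has both rows equal to the top row of M), and let c be the matrix with a 1 in the top-left entry and 0 elsewhere. Define x ⋆ y = α(x) + β(y) + c on A. Then the finite groupoid ⟨A, ⋆⟩ separates the 5-ary ordered terms s(v,w,x,y,z) = ((v ⋆ w) ⋆ (x ⋆ y)) ⋆ z and t(v,w,x,y,z) = ((v ⋆ (w ⋆ x)) ⋆ y) ⋆ z: for all v,w,x,y,z ∈ A, s(v,w,x,y,z) ≠ t(v,w,x,y,z). -/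
/-- The endomorphism `α` of the group of `2 × 3` matrices over `Z₂` that copies the
left column onto the middle column and the middle column onto the right column:
`α(M)` has columns `M₍·,0₎, M₍·,0₎, M₍·,1₎`. -/
def alphaEnd (M : Matrix (Fin 2) (Fin 3) (ZMod 2)) : Matrix (Fin 2) (Fin 3) (ZMod 2) :=
  Matrix.of fun i j => M i ⟨j.1 - 1, lt_of_le_of_lt (Nat.sub_le _ _) j.2⟩

/-- The endomorphism `β` that copies the top row onto the bottom row:
both rows of `β(M)` equal the top row of `M`. -/
def betaEnd (M : Matrix (Fin 2) (Fin 3) (ZMod 2)) : Matrix (Fin 2) (Fin 3) (ZMod 2) :=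
  Matrix.of fun _ j => M 0 j

/-- The matrix `c` with a `1` in the top-left entry and `0` elsewhere. -/
def cMat : Matrix (Fin 2) (Fin 3) (ZMod 2) :=
  Matrix.of fun i j => if i = 0 ∧ j = 0 then 1 else 0

/-- The affine endomorphism groupoid operation `x ⋆ y = α(x) + β(y) + c`. -/
def affOp (x y : Matrix (Fin 2) (Fin 3) (ZMod 2)) : Matrix (Fin 2) (Fin 3) (ZMod 2) :=
  alphaEnd x + betaEnd y + cMat

/-- The (64-element) affine endomorphism groupoid `⟨A, ⋆⟩`, where `A` is
the abelian group of `2 × 3` matrices over `Z₂` and `x ⋆ y = α(x) + β(y) + c`,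
separates the 5-ary ordered terms `s(v,w,x,y,z) = ((v ⋆ w) ⋆ (x ⋆ y)) ⋆ z` and
`t(v,w,x,y,z) = ((v ⋆ (w ⋆ x)) ⋆ y) ⋆ z`. -/
theorem affine_groupoid_separates :
    ∀ v w x y z : Matrix (Fin 2) (Fin 3) (ZMod 2),
      affOp (affOp (affOp v w) (affOp x y)) z ≠ affOp (affOp (affOp v (affOp w x)) y) z := by
  intro v w x y z h
  have h2 := congrFun (congrFun h 0) 2
  simp [affOp, alphaEnd, betaEnd, cMat] at h2
  grind
end

section
/- Let p = p₀p₁⋯p_j be a nonempty string over {l,r}, let m, n be natural numbers, and fix fresh indices a, a+1, …, a+j−1 pairwise distinct and distinct from m and n. Let ⋆ be the groupoid operation ‖m,p,n‖ on finitely supported vectors over Z₂ (or more generally ⋆ = ‖m,p,n‖ + ⋆′, the pointwise sum mod 2, where ⋆′ is any operation whose output is always 0 in components n, a, a+1, …, a+j−1). Let s be any groupoid term such that p is the path to a node of T(s), and let s_p be the subterm of s rooted at that node. Then for all values of the variables of s, s[n] = s_p[m], where s[n] denotes the n-th component of the value of s computed with ⋆. -/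
/-- The subterm of `s` rooted at the node of `T(s)` with path `p` (a string over
`{l, r}`, here `false = l`, `true = r`, read from the root), if such a node exists. -/
def subtermAt {α : Type*} : FreeMagma α → List Bool → Option (FreeMagma α)
  | s, [] => some s
  | .of _, _ :: _ => none
  | .mul s t, b :: p => subtermAt (bif b then t else s) p

/-- `sel b x y` is `x` if `b = false` (i.e. the letter `l`) and `y` if `b = true`
(i.e. the letter `r`). -/
def sel {G : Type*} (b : Bool) (x y : G) : G := bif b then y else x

theorem path_aux {α : Type*} (star : (ℕ →₀ ZMod 2) → (ℕ →₀ ZMod 2) → (ℕ →₀ ZMod 2))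
    (f : α → (ℕ →₀ ZMod 2)) (sp : FreeMagma α) (p : List Bool) :
    ∀ (c : ℕ → ℕ) (s : FreeMagma α),
      (∀ i < p.length, ∀ x y, star x y (c i) = sel (p.getD i false) x y (c (i + 1))) →
      subtermAt s p = some sp →
      evalWith star f s (c 0) = evalWith star f sp (c p.length) := by
  induction p with
  | nil =>
    intro c s _ h
    have h' : s = sp := by cases s <;> simpa [subtermAt] using h
    subst h'
    rfl
  | cons b p ih =>
    intro c s hc h
    cases s with
    | of v => simp [subtermAt] at h
    | mul s t =>
      have h0 := hc 0 (by simp) (evalWith star f s) (evalWith star f t)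
      have h1 := ih (fun i => c (i + 1)) (bif b then t else s)
        (fun i hi x y => by simpa using hc (i + 1) (by simpa using hi) x y)
        (by simpa only [subtermAt] using h)
      change star (evalWith star f s) (evalWith star f t) (c 0) = _
      rw [h0]
      cases b <;> simpa [sel] using h1

/-- Let `p = p₀p₁⋯p_j` be a nonempty string over `{l, r}`
(`false = l`, `true = r`), let `m n` be naturals, and let the fresh indices
`a, a+1, …, a+j-1` be distinct from `m` and `n`.  Let `⋆` be any operation on finitely
supported vectors over `Z₂` agreeing with `‖m,p,n‖` on components `n, a, …, a+j-1`
(e.g. `‖m,p,n‖` itself, or `‖m,p,n‖ + ⋆′` with `⋆′` vanishing on those components):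
writing `z = x ⋆ y`, if `j = 0` then `z[n] = (x or y)[m]` according as `p₀ = l` or `r`;
if `j ≥ 1` then `z[n] = (x or y)[a]` according to `p₀`, `z[a+i] = (x or y)[a+i+1]`
according to `p_{i+1}` for `0 ≤ i ≤ j-2`, and `z[a+j-1] = (x or y)[m]` according
to `p_j`.  If `s` is any groupoid term such that `p` is the path to a node of `T(s)`,
with subterm `s_p` rooted there, then `s[n] = s_p[m]` for all values of the variables. -/
theorem path_lemma (p : List Bool) (hp : p ≠ []) (m n a : ℕ)
    (hdist : ∀ i < p.length - 1, a + i ≠ m ∧ a + i ≠ n)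
    (star : (ℕ →₀ ZMod 2) → (ℕ →₀ ZMod 2) → (ℕ →₀ ZMod 2))
    (hn0 : p.length = 1 → ∀ x y, star x y n = sel (p.getD 0 false) x y m)
    (hn1 : 2 ≤ p.length → ∀ x y, star x y n = sel (p.getD 0 false) x y a)
    (hmid : ∀ i, i + 2 ≤ p.length - 1 → ∀ x y,
      star x y (a + i) = sel (p.getD (i + 1) false) x y (a + i + 1))
    (hlast : 2 ≤ p.length → ∀ x y,
      star x y (a + (p.length - 2)) = sel (p.getD (p.length - 1) false) x y m)
    {α : Type*} (s sp : FreeMagma α) (hsp : subtermAt s p = some sp)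
    (f : α → (ℕ →₀ ZMod 2)) :
    evalWith star f s n = evalWith star f sp m := by
  have hpos : 0 < p.length := List.length_pos_iff.mpr hp
  have key := path_aux star f sp p
    (fun i => if i = p.length then m else if i = 0 then n else a + (i - 1)) s ?_ hsp
  · simpa [hpos.ne, hp] using key
  · intro i hi x y
    rcases i with _ | i
    · by_cases h1 : p.length = 1
      · simpa [h1] using hn0 h1 x y
      · have h2 : 1 ≠ p.length := fun h => h1 h.symm
        have h3 : 0 ≠ p.length := hpos.ne
        simpa only [if_neg h2, if_neg h3, if_true, zero_add, one_ne_zero, if_false, Nat.sub_self,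
          add_zero] using hn1 (by omega) x y
    · have h3 : i + 1 ≠ p.length := by omega
      have h4 : i + 1 ≠ 0 := by omega
      have h5 : i + 1 + 1 ≠ 0 := by omega
      by_cases h1 : i + 1 + 1 = p.length
      · have e := hlast (by omega) x y
        rw [show p.length - 2 = i by omega, show p.length - 1 = i + 1 by omega] at e
        simpa only [if_neg h3, if_neg h4, if_pos h1, Nat.add_sub_cancel] using e
      · have e := hmid i (by omega) x y
        simpa only [if_neg h3, if_neg h4, if_neg h1, if_neg h5, Nat.add_sub_cancel,
          ← add_assoc] using e
end

section
/- Let s and t be any groupoid terms (variables may repeat and need not be in order). Suppose the variable x has an occurrence in s whose path is p and an occurrence in t whose path is q, where q is a proper initial substring of p. Then there is a finite groupoid that separates s and t. -/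
/-- The list of variable occurrences of a term, together with their paths: strings
over `{l, r}` (here `false = l`, `true = r`) read from the root of `T(s)`. -/
def leafPaths {α : Type*} : FreeMagma α → List (α × List Bool)
  | .of a => [(a, [])]
  | .mul s t => (leafPaths s).map (fun q => (q.1, false :: q.2)) ++
      (leafPaths t).map (fun q => (q.1, true :: q.2))

/-- Read coordinate `k` of `a`; coordinate `p.length` is the negation of coordinate `m`. -/
def extCoord (p : List Bool) (m : ℕ) (a : Fin p.length → Bool) (k : ℕ) : Bool :=
  if h : k < p.length then a ⟨k, h⟩ else if hm : m < p.length then !(a ⟨m, hm⟩) else false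

/-- Coordinate `i` of the product reads coordinate `i + 1` of the factor chosen by `p[i]`. -/
def pathOp (p : List Bool) (m : ℕ) (a b : Fin p.length → Bool) : Fin p.length → Bool :=
  fun i => extCoord p m (if p[i.1] then b else a) (i.1 + 1)

theorem extCoord_eval {α : Type*} (p : List Bool) (m : ℕ) (f : α → Fin p.length → Bool) (x : α)
    (s : FreeMagma α) : ∀ (r rest : List Bool) (i : ℕ), (x, r) ∈ leafPaths s →
      p.drop i = r ++ rest →
      extCoord p m (evalWith (pathOp p m) f s) i = extCoord p m (f x) (i + r.length) := by
  induction s with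
  | ih1 a =>
    intro r rest i h hd
    change (x, r) ∈ [(a, [])] at h
    simp only [List.mem_singleton, Prod.mk.injEq] at h
    obtain ⟨rfl, rfl⟩ := h
    rfl
  | ih2 s t ihs iht =>
    intro r rest i h hd
    change (x, r) ∈ (leafPaths s).map (fun q => (q.1, false :: q.2)) ++
      (leafPaths t).map (fun q => (q.1, true :: q.2)) at h
    change extCoord p m (pathOp p m (evalWith (pathOp p m) f s) (evalWith (pathOp p m) f t)) i = _
    have key : ∀ (b : Bool) (r1 : List Bool), p.drop i = b :: r1 →
        ∃ h : i < p.length, p[i] = b ∧ p.drop (i + 1) = r1 := by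
      intro b r1 h1
      have hi : i < p.length := by
        by_contra hc
        rw [List.drop_eq_nil_of_le (by omega)] at h1
        cases h1
      rw [List.drop_eq_getElem_cons hi] at h1
      injection h1 with h2 h3
      exact ⟨hi, h2, h3⟩
    rcases List.mem_append.1 h with h | h
    · obtain ⟨⟨y, r1⟩, h1, h2⟩ := List.mem_map.1 h
      simp only [Prod.mk.injEq] at h2
      obtain ⟨rfl, rfl⟩ := h2
      obtain ⟨hi, hb, hd'⟩ := key _ _ hd
      have := ihs r1 rest (i + 1) h1 hd'
      rw [extCoord, dif_pos hi]
      simp only [pathOp, hb, List.length_cons]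
      rw [show i + (r1.length + 1) = i + 1 + r1.length by omega, ← this]
      simp
    · obtain ⟨⟨y, r1⟩, h1, h2⟩ := List.mem_map.1 h
      simp only [Prod.mk.injEq] at h2
      obtain ⟨rfl, rfl⟩ := h2
      obtain ⟨hi, hb, hd'⟩ := key _ _ hd
      have := iht r1 rest (i + 1) h1 hd'
      rw [extCoord, dif_pos hi]
      simp only [pathOp, hb, List.length_cons]
      rw [show i + (r1.length + 1) = i + 1 + r1.length by omega, ← this]
      simp


/-- Let `s` and `t` be any groupoid terms (variables may repeat and need
not be in order).  If the variable `x` has an occurrence in `s` with path `p` and an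
occurrence in `t` with path `q`, where `q` is a proper initial substring of `p`, then
there is a finite groupoid separating `s` and `t`. -/
theorem cover_theorem {α : Type*} (s t : FreeMagma α) (x : α) (p q : List Bool)
    (hps : (x, p) ∈ leafPaths s) (hqt : (x, q) ∈ leafPaths t)
    (hpre : q <+: p) (hne : q ≠ p) :
    ∃ (G : Type) (op : G → G → G), Finite G ∧ Separates op s t := by
  have hlt : q.length < p.length := by
    refine lt_of_le_of_ne hpre.length_le fun h => hne (hpre.eq_of_length h)
  obtain ⟨u, hu⟩ := hpre
  refine ⟨Fin p.length → Bool, pathOp p q.length, inferInstance, fun f heq => ?_⟩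
  have h1 := extCoord_eval p q.length f x s p [] 0 hps (by simp)
  have h2 := extCoord_eval p q.length f x t q u 0 hqt (by simp [hu])
  rw [heq, h2] at h1
  simp [extCoord, hlt] at h1
end

section
/- Let k ≥ 3 and let s and t be two distinct ordered terms on x₁,…,x_k. Let x_m be the leftmost variable on which s and t disagree, i.e., path_s(x_i) = path_t(x_i) for all i < m and path_s(x_m) ≠ path_t(x_m) (such m exists since s ≠ t). Then one of path_s(x_m) and path_t(x_m) is a proper initial substring of the other. -/
def pathsOf {α : Type*} (s : FreeMagma α) : List (List Bool) := (leafPaths s).map Prod.snd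

def stripB (b : Bool) : List Bool → Option (List Bool)
  | [] => none
  | c :: l => if c = b then some l else none

theorem pathsOf_mul {α : Type*} (s t : FreeMagma α) :
    pathsOf (.mul s t) = (pathsOf s).map (List.cons false) ++ (pathsOf t).map (List.cons true) := by
  simp [pathsOf, leafPaths, Function.comp_def]

theorem strip_false {α : Type*} (s t : FreeMagma α) :
    (pathsOf (.mul s t)).filterMap (stripB false) = pathsOf s := by
  rw [pathsOf_mul, List.filterMap_append, List.filterMap_map, List.filterMap_map]
  simp [Function.comp_def, stripB]

theorem strip_true {α : Type*} (s t : FreeMagma α) :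
    (pathsOf (.mul s t)).filterMap (stripB true) = pathsOf t := by
  rw [pathsOf_mul, List.filterMap_append, List.filterMap_map, List.filterMap_map]
  simp [Function.comp_def, stripB]

theorem kraft {α : Type*} (s : FreeMagma α) :
    ((pathsOf s).map (fun p => (1 / 2 : ℚ) ^ p.length)).sum = 1 := by
  induction s with
  | ih1 a => simp [pathsOf, leafPaths]
  | ih2 s t hs ht =>
    change ((pathsOf (.mul s t)).map _).sum = 1
    rw [pathsOf_mul, List.map_append, List.sum_append, List.map_map, List.map_map]
    simp only [Function.comp_def, List.length_cons, pow_succ, List.sum_map_mul_right, hs, ht]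
    norm_num

theorem no_proper {α : Type*} (s t : FreeMagma α) (L A : List (List Bool)) (p : List Bool)
    (hs : pathsOf s = L ++ p :: A) (ht : pathsOf t = L) : False := by
  have h1 := kraft s
  have h2 := kraft t
  rw [hs] at h1
  rw [ht] at h2
  simp only [List.map_append, List.sum_append, List.map_cons, List.sum_cons, h2] at h1
  have h3 : 0 ≤ (A.map (fun p => (1 / 2 : ℚ) ^ p.length)).sum := by
    apply List.sum_nonneg
    intro x hx
    obtain ⟨a, -, rfl⟩ := List.mem_map.1 hx
    positivity
  have h4 : 0 < (1 / 2 : ℚ) ^ p.length := by positivity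
  linarith

theorem after_true {α : Type*} (s t : FreeMagma α) (L A : List (List Bool)) (p : List Bool)
    (h : pathsOf (.mul s t) = L ++ (true :: p) :: A) : A.filterMap (stripB false) = [] := by
  have hp : (pathsOf (.mul s t)).Pairwise
      (fun a b => stripB false b = none ∨ stripB true a = none) := by
    rw [pathsOf_mul, List.pairwise_append, List.pairwise_map, List.pairwise_map]
    simp [stripB, List.pairwise_iff_getElem]
  rw [h, List.pairwise_append, List.pairwise_cons] at hp
  rw [List.filterMap_eq_nil_iff]
  intro a ha
  simpa [stripB] using hp.2.1.1 a ha

theorem cross {α : Type*} (s1 s2 t1 t2 : FreeMagma α) (L A B : List (List Bool)) (p q : List Bool)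
    (hs : pathsOf (.mul s1 s2) = L ++ (false :: p) :: A)
    (ht : pathsOf (.mul t1 t2) = L ++ (true :: q) :: B) : False := by
  have h1 := strip_false s1 s2
  have h2 := strip_false t1 t2
  have h3 := after_true _ _ _ _ _ ht
  rw [hs, List.filterMap_append, List.filterMap_cons_some (b := p) (by simp [stripB])] at h1
  rw [ht, List.filterMap_append, List.filterMap_cons_none (by simp [stripB]), h3,
    List.append_nil] at h2
  exact no_proper _ _ _ _ _ h1.symm h2.symm

theorem comparable {α : Type*} (s : FreeMagma α) : ∀ (t : FreeMagma α)
    (L A B : List (List Bool)) (p q : List Bool)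
    (_ : pathsOf s = L ++ p :: A) (_ : pathsOf t = L ++ q :: B), p <+: q ∨ q <+: p := by
  induction s with
  | ih1 a =>
    intro t L A B p q hs ht
    have : p ∈ pathsOf (FreeMagma.of a) := by rw [hs]; simp
    simp [pathsOf, leafPaths] at this
    simp [this]
  | ih2 s1 s2 ih1 ih2 =>
    intro t L A B p q hs ht
    change pathsOf (.mul s1 s2) = _ at hs
    cases t with
    | of a =>
      have : q ∈ pathsOf (FreeMagma.of a) := by
        change q ∈ pathsOf (.of a)
        rw [ht]; simp
      simp [pathsOf, leafPaths] at this
      simp [this]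
    | mul t1 t2 =>
      change pathsOf (.mul t1 t2) = _ at ht
      rcases p with _ | ⟨_ | _, p⟩
      · simp
      · rcases q with _ | ⟨_ | _, q⟩
        · simp
        · have h1 := strip_false s1 s2
          have h2 := strip_false t1 t2
          rw [hs, List.filterMap_append, List.filterMap_cons_some (b := p) (by simp [stripB])] at h1
          rw [ht, List.filterMap_append, List.filterMap_cons_some (b := q) (by simp [stripB])] at h2
          simpa using ih1 _ _ _ _ _ _ h1.symm h2.symm
        · exact (cross _ _ _ _ _ _ _ _ _ hs ht).elim
      · rcases q with _ | ⟨_ | _, q⟩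
        · simp
        · exact (cross _ _ _ _ _ _ _ _ _ ht hs).elim
        · have h1 := strip_true s1 s2
          have h2 := strip_true t1 t2
          rw [hs, List.filterMap_append, List.filterMap_cons_some (b := p) (by simp [stripB])] at h1
          rw [ht, List.filterMap_append, List.filterMap_cons_some (b := q) (by simp [stripB])] at h2
          simpa using ih2 _ _ _ _ _ _ h1.symm h2.symm

theorem map_fst {α : Type*} (s : FreeMagma α) : (leafPaths s).map Prod.fst = varList s := by
  induction s with
  | ih1 a => simp [leafPaths, varList]
  | ih2 s t hs ht =>
    change (leafPaths (.mul s t)).map Prod.fst = varList (.mul s t)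
    simp [leafPaths, varList, ← hs, ← ht, Function.comp_def]

theorem len_ord {k : ℕ} {s : FreeMagma (Fin k)} (hs : IsOrderedTerm s) :
    (leafPaths s).length = k := by
  have := congrArg List.length (map_fst s)
  rw [hs] at this
  simpa using this

theorem mem_ord {k : ℕ} {s : FreeMagma (Fin k)} (hs : IsOrderedTerm s) (i : Fin k)
    (u : List Bool) : (i, u) ∈ leafPaths s ↔ (leafPaths s)[i.1]? = some (i, u) := by
  constructor
  · intro h
    obtain ⟨j, hj, e⟩ := List.getElem_of_mem h
    have h1 : ((leafPaths s).map Prod.fst)[j]? = (List.finRange k)[j]? := by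
      rw [map_fst, hs]
    have hjk : j < k := by rw [← len_ord hs]; exact hj
    simp [hj, e, hjk] at h1
    subst h1
    simp [hj, e]
  · exact List.mem_of_getElem?

theorem split_ord {k : ℕ} {s : FreeMagma (Fin k)} (m : Fin k) (p : List Bool)
    (h : (leafPaths s)[m.1]? = some (m, p)) :
    pathsOf s = ((leafPaths s).take m.1).map Prod.snd ++ p ::
      ((leafPaths s).drop (m.1 + 1)).map Prod.snd := by
  obtain ⟨hl, e⟩ := List.getElem?_eq_some_iff.1 h
  have := List.take_append_drop m.1 (leafPaths s)
  rw [List.drop_eq_getElem_cons hl, e] at this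
  conv_lhs => rw [pathsOf, ← this]
  simp

/-- Let `k ≥ 3` and let `s`, `t` be distinct ordered terms on
`x₁, …, x_k`.  Let `x_m` be the leftmost variable on which `s` and `t` disagree:
`path_s(x_i) = path_t(x_i)` for all `i < m`, while `path_s(x_m) = p ≠ q = path_t(x_m)`.
Then one of `p` and `q` is a proper initial substring of the other. -/
theorem leftmost_disagreement_prefix (k : ℕ) (hk : 3 ≤ k)
    (s t : FreeMagma (Fin k)) (hs : IsOrderedTerm s) (ht : IsOrderedTerm t) (hst : s ≠ t)
    (m : Fin k) (p q : List Bool)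
    (hps : (m, p) ∈ leafPaths s) (hqt : (m, q) ∈ leafPaths t)
    (hagree : ∀ i : Fin k, i < m → ∀ u : List Bool,
      ((i, u) ∈ leafPaths s ↔ (i, u) ∈ leafPaths t))
    (hne : p ≠ q) :
    (p <+: q ∧ p ≠ q) ∨ (q <+: p ∧ q ≠ p) := by
  have h1 := (mem_ord hs m p).1 hps
  have h2 := (mem_ord ht m q).1 hqt
  have hL : (leafPaths s).take m.1 = (leafPaths t).take m.1 := by
    apply List.ext_getElem
    · simp [len_ord hs, len_ord ht]
    · intro i hi hi'
      have him : i < m.1 := by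
        have := hi
        simp at this
        exact this.1
      have hik : i < k := him.trans m.2
      have hlen : i < (leafPaths s).length := by rw [len_ord hs]; exact hik
      have hfst : ((leafPaths s)[i]).1 = ⟨i, hik⟩ := by
        have h3 : ((leafPaths s).map Prod.fst)[i]? = (List.finRange k)[i]? := by
          rw [map_fst, hs]
        simpa [hlen, hik] using h3
      have hmem : ((⟨i, hik⟩ : Fin k), ((leafPaths s)[i]).2) ∈ leafPaths s := by
        rw [← hfst]
        exact List.getElem_mem hlen
      have h5 := (mem_ord ht _ _).1 ((hagree ⟨i, hik⟩ him _).1 hmem)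
      obtain ⟨h6, h7⟩ := List.getElem?_eq_some_iff.1 h5
      rw [List.getElem_take, List.getElem_take]
      rw [h7, ← hfst]
  have h3 := split_ord m p h1
  have h4 := split_ord m q h2
  rw [← hL] at h4
  rcases comparable s t _ _ _ p q h3 h4 with h | h
  · exact Or.inl ⟨h, hne⟩
  · exact Or.inr ⟨h, hne.symm⟩
end

section
/- For every k ≥ 3 there is a finite groupoid that is k-antiassociative, i.e., a finite groupoid that separates every pair of distinct ordered terms on x₁,…,x_k. -/
/-- Depth of the leftmost leaf. -/
def leftDepth {α : Type*} : FreeMagma α → ℕ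
  | .of _ => 0
  | .mul s _ => leftDepth s + 1

/-- The leftmost leaf. -/
def leftLeaf {α : Type*} : FreeMagma α → α
  | .of a => a
  | .mul s _ => leftLeaf s

theorem varList_leftLeaf {α : Type*} (s : FreeMagma α) :
    ∃ l, varList s = leftLeaf s :: l := by
  induction s using FreeMagma.rec with
  | of a => exact ⟨[], rfl⟩
  | mul s t ih _ =>
    obtain ⟨l, hl⟩ := ih
    refine ⟨l ++ varList t, ?_⟩
    change varList s ++ varList t = leftLeaf s :: (l ++ varList t)
    rw [hl]; rfl

theorem varList_length_pos {α : Type*} (s : FreeMagma α) : 0 < (varList s).length := by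
  obtain ⟨l, hl⟩ := varList_leftLeaf s
  rw [hl]; simp

theorem leftDepth_lt {α : Type*} (s : FreeMagma α) : leftDepth s < (varList s).length := by
  induction s using FreeMagma.rec with
  | of a => exact Nat.zero_lt_one
  | mul s t ih _ =>
    change leftDepth s + 1 < (varList s ++ varList t).length
    have := varList_length_pos t
    rw [List.length_append]; omega

/-- The operation of the inductive step. -/
def stepOp {G : Type} (n : ℕ) (op : G → G → G) (x y : ZMod (n + 2) × G × G × G) :
    ZMod (n + 2) × G × G × G :=
  (x.1 + 1, op x.2.1 y.2.1, x.2.1, y.2.1)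

theorem eval_step_fst {α G : Type} (n : ℕ) (op : G → G → G)
    (f : α → ZMod (n + 2) × G × G × G) (s : FreeMagma α) :
    (evalWith (stepOp n op) f s).1 = (f (leftLeaf s)).1 + (leftDepth s : ZMod (n + 2)) := by
  induction s using FreeMagma.rec with
  | of a => simp [evalWith, leftLeaf, leftDepth]
  | mul s t ih _ =>
    change (evalWith (stepOp n op) f s).1 + 1
      = (f (leftLeaf s)).1 + ((leftDepth s + 1 : ℕ) : ZMod (n + 2))
    rw [ih]; push_cast; ring

theorem eval_step_snd {α G : Type} (n : ℕ) (op : G → G → G)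
    (f : α → ZMod (n + 2) × G × G × G) (s : FreeMagma α) :
    (evalWith (stepOp n op) f s).2.1 = evalWith op (fun a => (f a).2.1) s := by
  induction s using FreeMagma.rec with
  | of a => rfl
  | mul s t ih ih' =>
    change op (evalWith (stepOp n op) f s).2.1 (evalWith (stepOp n op) f t).2.1 = op _ _
    rw [ih, ih']

theorem sep_leaf {α G : Type} (n : ℕ) (op : G → G → G) (a : α) (s t : FreeMagma α)
    (hlen : (varList (.mul s t)).length ≤ n + 1) (r r' : List α)
    (h : varList (.of a) ++ r = varList (.mul s t) ++ r') :
    Separates (stepOp n op) (.of a) (.mul s t) := by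
  intro f he
  have h1 := congrArg Prod.fst he
  rw [eval_step_fst, eval_step_fst] at h1
  have hl : leftLeaf (.mul s t) = a := by
    obtain ⟨l, hl⟩ := varList_leftLeaf (.mul s t)
    rw [hl] at h
    have : a :: r = leftLeaf (.mul s t) :: (l ++ r') := h
    exact (List.cons.inj this).1.symm
  rw [hl] at h1
  have h2 := add_left_cancel h1
  have h3 := leftDepth_lt (.mul s t)
  change ((0 : ℕ) : ZMod (n + 2)) = _ at h2
  rw [ZMod.natCast_eq_natCast_iff'] at h2
  rw [Nat.mod_eq_of_lt (by omega), Nat.mod_eq_of_lt (by omega)] at h2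
  have : leftDepth (.mul s t) = leftDepth s + 1 := rfl
  omega

theorem exists_sep (α : Type) (n : ℕ) : ∃ (G : Type) (op : G → G → G), Finite G ∧
    ∀ s t : FreeMagma α, (varList s).length ≤ n → (varList t).length ≤ n →
      (∃ r r', varList s ++ r = varList t ++ r') → s ≠ t → Separates op s t := by
  induction n with
  | zero =>
    refine ⟨Unit, fun _ _ => (), inferInstance, fun s t hs => ?_⟩
    have := varList_length_pos s
    omega
  | succ n ih =>
    obtain ⟨G, op, hG, H⟩ := ih
    refine ⟨_, stepOp n op, inferInstance, ?_⟩
    rintro s t hs ht ⟨r, r', h⟩ hne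
    match s, t with
    | .of a, .of b =>
      have : a :: r = b :: r' := h
      exact absurd (congrArg FreeMagma.of (List.cons.inj this).1) hne
    | .of a, .mul t₁ t₂ => exact sep_leaf n op a t₁ t₂ ht r r' h
    | .mul s₁ s₂, .of b =>
      exact fun f he => sep_leaf n op b s₁ s₂ hs r' r h.symm f he.symm
    | .mul s₁ s₂, .mul t₁ t₂ =>
      intro f he
      change (varList s₁ ++ varList s₂).length ≤ n + 1 at hs
      change (varList t₁ ++ varList t₂).length ≤ n + 1 at ht
      change (varList s₁ ++ varList s₂) ++ r = (varList t₁ ++ varList t₂) ++ r' at h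
      rw [List.length_append] at hs ht
      have p1 := varList_length_pos s₁
      have p2 := varList_length_pos s₂
      have p3 := varList_length_pos t₁
      have p4 := varList_length_pos t₂
      rw [List.append_assoc, List.append_assoc] at h
      have e1 : (evalWith (stepOp n op) f s₁).2.1 = (evalWith (stepOp n op) f t₁).2.1 :=
        congrArg (fun x => x.2.2.1) he
      have e2 : (evalWith (stepOp n op) f s₂).2.1 = (evalWith (stepOp n op) f t₂).2.1 :=
        congrArg (fun x => x.2.2.2) he
      rw [eval_step_snd, eval_step_snd] at e1 e2
      by_cases h1 : s₁ = t₁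
      · subst h1
        have h2 : s₂ ≠ t₂ := by rintro rfl; exact hne rfl
        exact H s₂ t₂ (by omega) (by omega) ⟨r, r', List.append_cancel_left h⟩ h2 _ e2
      · exact H s₁ t₁ (by omega) (by omega) ⟨_, _, h⟩ h1 _ e1

/-- For every `k ≥ 3` there is a finite groupoid that is
`k`-antiassociative. -/
theorem exists_finite_kAntiassociative (k : ℕ) (hk : 3 ≤ k) :
    ∃ (G : Type) (op : G → G → G), Finite G ∧ KAntiassociative k op := by
  obtain ⟨G, op, hG, H⟩ := exists_sep (Fin k) k
  refine ⟨G, op, hG, fun s t hs ht hne => ?_⟩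
  unfold IsOrderedTerm at hs ht
  exact H s t (by simp [hs]) (by simp [ht]) ⟨[], [], by rw [hs, ht]⟩ hne
end

section
/- Let s and t be groupoid terms which have a cycle. Then s and t are separated in some finite groupoid. -/
/-- Given terms `s` and `t`, the variable `y` occurs above the variable `z` iff there
are occurrences `y′` of `y` and `z′` of `z` such that `path_s(y′)` is an initial
substring of `path_t(z′)`, or `path_t(y′)` is an initial substring of `path_s(z′)`. -/
def OccursAbove {α : Type*} (s t : FreeMagma α) (y z : α) : Prop :=
  (∃ p q, (y, p) ∈ leafPaths s ∧ (z, q) ∈ leafPaths t ∧ p <+: q) ∨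
  (∃ p q, (y, p) ∈ leafPaths t ∧ (z, q) ∈ leafPaths s ∧ p <+: q)

/-- `y` occurs strictly above `z`: as in `OccursAbove`, with the initial substring
proper. -/
def OccursStrictlyAbove {α : Type*} (s t : FreeMagma α) (y z : α) : Prop :=
  (∃ p q, (y, p) ∈ leafPaths s ∧ (z, q) ∈ leafPaths t ∧ p <+: q ∧ p ≠ q) ∨
  (∃ p q, (y, p) ∈ leafPaths t ∧ (z, q) ∈ leafPaths s ∧ p <+: q ∧ p ≠ q)

/-- Terms `s` and `t` have a cycle: a sequence of variables `y₀, y₁, …, y_{m-1}`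
(indices mod `m`) with each `y_i` occurring above `y_{i+1}`, and at least one
occurring strictly above the next. -/
def HaveCycle {α : Type*} (s t : FreeMagma α) : Prop :=
  ∃ m : ℕ, 1 ≤ m ∧ ∃ y : ℕ → α,
    (∀ i < m, OccursAbove s t (y i) (y ((i + 1) % m))) ∧
    (∃ i < m, OccursStrictlyAbove s t (y i) (y ((i + 1) % m)))

/-- Lists of bounded length. -/
abbrev CBList (n : ℕ) : Type := {l : List Bool // l.length ≤ n}

/-- The separating finite groupoid: labels indexed by addresses and cyclic words. -/
abbrev CGrp (N L : ℕ) : Type := CBList N → CBList L → ZMod (L + 1)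

/-- Its operation. -/
def cop (N L : ℕ) (a b : CGrp N L) : CGrp N L
  | ⟨[], _⟩, ⟨[], _⟩ => 0
  | ⟨[], h⟩, ⟨c :: v, hv⟩ =>
      (bif c then b else a) ⟨[], h⟩ ⟨v ++ [c], by simpa using hv⟩ + 1
  | ⟨c :: p, h⟩, v => (bif c then b else a) ⟨p, by simp at h; omega⟩ v

theorem cop_eval {α : Type*} (N L : ℕ) (f : α → CGrp N L) (t : FreeMagma α) (z : α) :
    ∀ (p u v : List Bool) (hp : p.length ≤ N) (huv : (u ++ v).length ≤ L)
      (hvu : (v ++ u).length ≤ L), (z, p ++ u) ∈ leafPaths t →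
      evalWith (cop N L) f t ⟨p, hp⟩ ⟨u ++ v, huv⟩
        = f z ⟨[], Nat.zero_le _⟩ ⟨v ++ u, hvu⟩ + (u.length : ZMod (L + 1)) := by
  induction t with
  | ih1 a =>
    intro p u v hp huv hvu hm
    simp only [leafPaths, List.mem_singleton, Prod.mk.injEq, List.append_eq_nil_iff] at hm
    obtain ⟨rfl, rfl, rfl⟩ := hm
    simp [evalWith]
  | ih2 a b iha ihb =>
    intro p u v hp huv hvu hm
    have hm' : ((z, p ++ u) ∈ (leafPaths a).map (fun q => (q.1, false :: q.2)) ++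
      (leafPaths b).map (fun q => (q.1, true :: q.2))) := hm
    change cop N L (evalWith (cop N L) f a) (evalWith (cop N L) f b) _ _ = _
    cases p with
    | cons c p =>
      cases c
      · exact iha p u v _ huv hvu (by simpa using hm')
      · exact ihb p u v _ huv hvu (by simpa using hm')
    | nil =>
      cases u with
      | nil => simp at hm'
      | cons c u =>
        have e : v ++ c :: u = (v ++ [c]) ++ u := by simp
        have h1 : (u ++ (v ++ [c])).length ≤ L := by simp at huv ⊢; omega
        have h2 : ((v ++ [c]) ++ u).length ≤ L := by simp at huv ⊢; omega
        have key : ∀ w : FreeMagma α, (evalWith (cop N L) f w ⟨[], hp⟩ ⟨u ++ (v ++ [c]), h1⟩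
            = f z ⟨[], Nat.zero_le _⟩ ⟨(v ++ [c]) ++ u, h2⟩ + (u.length : ZMod (L + 1))) →
            evalWith (cop N L) f w ⟨[], hp⟩ ⟨(u ++ v) ++ [c], by simp at huv ⊢; omega⟩ + 1
              = f z ⟨[], Nat.zero_le _⟩ ⟨v ++ c :: u, hvu⟩
                + ((c :: u).length : ZMod (L + 1)) := by
          intro w hw
          simp only [e, List.append_assoc, List.length_cons, Nat.cast_add, Nat.cast_one] at hw ⊢
          rw [hw, add_assoc]
        cases c
        · exact key a (iha [] u (v ++ [false]) hp h1 h2 (by simpa using hm'))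
        · exact key b (ihb [] u (v ++ [true]) hp h1 h2 (by simpa using hm'))

/-- One step of a cycle with explicit remaining path. -/
def CStep {α : Type*} (s t : FreeMagma α) (y z : α) (u : List Bool) : Prop :=
  (∃ p, (y, p) ∈ leafPaths s ∧ (z, p ++ u) ∈ leafPaths t) ∨
  (∃ p, (y, p) ∈ leafPaths t ∧ (z, p ++ u) ∈ leafPaths s)

/-- Composite of steps. -/
inductive CPath {α : Type*} (s t : FreeMagma α) : α → α → List Bool → Prop
  | nil (y : α) : CPath s t y y []
  | snoc {y z w : α} {u u' : List Bool} :
      CPath s t y z u → CStep s t z w u' → CPath s t y w (u ++ u')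

theorem cycle_path {α : Type*} (s t : FreeMagma α) (hcyc : HaveCycle s t) :
    ∃ y U, U ≠ [] ∧ CPath s t y y U := by
  obtain ⟨m, hm, y, h1, i, hi, h2⟩ := hcyc
  have h : ∀ j, ∃ u, j < m → CStep s t (y j) (y ((j + 1) % m)) u ∧ (j = i → u ≠ []) := by
    intro j
    by_cases hj : j < m
    · by_cases hji : j = i
      · subst hji
        rcases h2 with ⟨p, q, a, b, ⟨u, rfl⟩, hne⟩ | ⟨p, q, a, b, ⟨u, rfl⟩, hne⟩
        · exact ⟨u, fun _ => ⟨Or.inl ⟨p, a, b⟩, fun _ hu => hne (by simp [hu])⟩⟩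
        · exact ⟨u, fun _ => ⟨Or.inr ⟨p, a, b⟩, fun _ hu => hne (by simp [hu])⟩⟩
      · rcases h1 j hj with ⟨p, q, a, b, ⟨u, rfl⟩⟩ | ⟨p, q, a, b, ⟨u, rfl⟩⟩
        · exact ⟨u, fun _ => ⟨Or.inl ⟨p, a, b⟩, fun hh => absurd hh hji⟩⟩
        · exact ⟨u, fun _ => ⟨Or.inr ⟨p, a, b⟩, fun hh => absurd hh hji⟩⟩
    · exact ⟨[], fun hh => absurd hh hj⟩
  choose u hu using h
  have hk : ∀ k, k ≤ m → CPath s t (y 0) (y (k % m)) ((List.range k).flatMap u) := by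
    intro k
    induction k with
    | zero => intro _; simpa using CPath.nil (y 0)
    | succ k ih =>
      intro hk
      have := ih (by omega)
      rw [Nat.mod_eq_of_lt (by omega : k < m)] at this
      rw [List.range_succ, List.flatMap_append]
      simpa using CPath.snoc this (hu k (by omega)).1
  refine ⟨y 0, (List.range m).flatMap u, ?_, by simpa using hk m le_rfl⟩
  intro h0
  rw [List.flatMap_eq_nil_iff] at h0
  exact (hu i hi).2 rfl (h0 i (by simpa using hi))

theorem path_bound {α : Type*} (t : FreeMagma α) :
    ∃ N, ∀ q ∈ leafPaths t, q.2.length ≤ N := by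
  refine ⟨((leafPaths t).map (fun q => q.2.length)).sum, fun q hq => ?_⟩
  exact List.le_sum_of_mem (List.mem_map.2 ⟨q, hq, rfl⟩)

/-- If the groupoid terms `s` and `t` have a cycle, then `s` and `t` are
separated in some finite groupoid. -/
theorem cycle_implies_finitely_separated {α : Type*} (s t : FreeMagma α)
    (hcyc : HaveCycle s t) :
    ∃ (G : Type) (op : G → G → G), Finite G ∧ Separates op s t := by
  obtain ⟨y, U, hU, hP⟩ := cycle_path s t hcyc
  obtain ⟨N₁, hN₁⟩ := path_bound s
  obtain ⟨N₂, hN₂⟩ := path_bound t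
  have hfin : ∀ n, Finite (CBList n) := fun n => (List.finite_length_le Bool n).to_subtype
  have := hfin (N₁ + N₂)
  have := hfin U.length
  have : Finite (ZMod (U.length + 1)) := inferInstance
  refine ⟨CGrp (N₁ + N₂) U.length, cop _ _, inferInstance, ?_⟩
  intro f hf
  have hstep : ∀ y z u, CStep s t y z u → ∀ (v : List Bool) (h1 : (u ++ v).length ≤ U.length)
      (h2 : (v ++ u).length ≤ U.length),
      f y ⟨[], Nat.zero_le _⟩ ⟨u ++ v, h1⟩
        = f z ⟨[], Nat.zero_le _⟩ ⟨v ++ u, h2⟩ + (u.length : ZMod (U.length + 1)) := by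
    intro y z u hs v h1 h2
    rcases hs with ⟨p, a, b⟩ | ⟨p, a, b⟩
    · have hp : p.length ≤ N₁ + N₂ := by have := hN₁ _ a; simp at this; omega
      have e1 := cop_eval _ _ f s y p [] (u ++ v) hp h1 (by simpa using h1) (by simpa using a)
      have e2 := cop_eval _ _ f t z p u v hp h1 h2 b
      rw [← e2, ← hf]
      simpa using e1.symm
    · have hp : p.length ≤ N₁ + N₂ := by have := hN₂ _ a; simp at this; omega
      have e1 := cop_eval _ _ f t y p [] (u ++ v) hp h1 (by simpa using h1) (by simpa using a)
      have e2 := cop_eval _ _ f s z p u v hp h1 h2 b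
      rw [← e2, hf]
      simpa using e1.symm
  have hpath : ∀ y z u, CPath s t y z u → ∀ (v : List Bool) (h1 : (u ++ v).length ≤ U.length)
      (h2 : (v ++ u).length ≤ U.length),
      f y ⟨[], Nat.zero_le _⟩ ⟨u ++ v, h1⟩
        = f z ⟨[], Nat.zero_le _⟩ ⟨v ++ u, h2⟩ + (u.length : ZMod (U.length + 1)) := by
    intro y z u hp
    induction hp with
    | nil => intro v h1 h2; simp
    | @snoc z w u u' hp hs ih =>
      intro v h1 h2
      have e1 := ih (u' ++ v) (by simpa using h1) (by simp at h1 ⊢; omega)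
      have e2 := hstep _ _ _ hs (v ++ u) (by simp at h1 ⊢; omega) (by simpa using h2)
      simp only [List.append_assoc, List.length_append, Nat.cast_add] at e1 e2 ⊢
      rw [e1, e2]
      ring
  have e := hpath y y U hP [] (by simp) (by simp)
  simp only [List.append_nil, List.nil_append] at e
  have h0 : ((U.length : ℕ) : ZMod (U.length + 1)) = 0 := by
    simpa using e
  rw [ZMod.natCast_eq_zero_iff] at h0
  have hpos : 0 < U.length := List.length_pos_iff.2 hU
  have := Nat.le_of_dvd hpos h0
  omega
end

section
/- The free groupoid on one generator is k-antiassociative for every k ≥ 3: for every k ≥ 3, any two distinct ordered terms s and t on x₁,…,x_k are separated in the free magma F_G(x) on one generator, i.e., s(f₁,…,f_k) ≠ t(f₁,…,f_k) for all elements f₁,…,f_k of F_G(x). -/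
/-- Number of leaves of a term. -/
def leafCount {α : Type*} : FreeMagma α → ℕ
  | .of _ => 1
  | .mul s t => leafCount s + leafCount t

theorem leafCount_pos {α : Type*} (t : FreeMagma α) : 0 < leafCount t := by
  induction t using FreeMagma.rec with
  | of a => exact Nat.one_pos
  | mul s t hs ht => exact Nat.add_pos_left hs _

theorem varList_ne_nil {α : Type*} (t : FreeMagma α) : varList t ≠ [] := by
  induction t using FreeMagma.rec with
  | of a => simp [varList]
  | mul s t hs ht => simp [varList, hs]

theorem leafCount_evalWith {α : Type*} (f : α → FreeMagma Unit) (t : FreeMagma α) :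
    leafCount (evalWith (fun a b => a * b) f t)
      = ((varList t).map (fun a => leafCount (f a))).sum := by
  induction t using FreeMagma.rec with
  | of a => simp [varList, evalWith]
  | mul s t hs ht =>
    simp only [varList, List.map_append, List.sum_append, ← hs, ← ht]
    rfl

theorem prefix_eq_of_sum {α : Type*} (g : α → ℕ) (hg : ∀ a, 0 < g a) (l₁ : List α) :
    ∀ l₂ m₁ m₂ : List α, l₁ ++ m₁ = l₂ ++ m₂ → (l₁.map g).sum = (l₂.map g).sum →
      l₁ = l₂ := by
  induction l₁ with
  | nil =>
    intro l₂ m₁ m₂ _ h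
    cases l₂ with
    | nil => rfl
    | cons b l₂ =>
      have := hg b
      simp at h
      omega
  | cons a l₁ ih =>
    intro l₂ m₁ m₂ e h
    cases l₂ with
    | nil =>
      have := hg a
      simp at h
      omega
    | cons b l₂ =>
      simp only [List.cons_append, List.cons.injEq] at e
      obtain ⟨rfl, e⟩ := e
      simp only [List.map_cons, List.sum_cons] at h
      rw [ih l₂ m₁ m₂ e (by omega)]

theorem length_two_le {α : Type*} (s t : FreeMagma α) :
    2 ≤ (varList s ++ varList t).length := by
  have h1 := List.length_pos_iff.2 (varList_ne_nil s)
  have h2 := List.length_pos_iff.2 (varList_ne_nil t)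
  rw [List.length_append]
  omega

theorem eq_of_evalWith_eq {α : Type*} (f : α → FreeMagma Unit) (s : FreeMagma α) :
    ∀ t : FreeMagma α, varList s = varList t →
      evalWith (fun a b => a * b) f s = evalWith (fun a b => a * b) f t → s = t := by
  induction s using FreeMagma.rec with
  | of a =>
    intro t hv _
    cases t with
    | of b =>
      simp [varList] at hv
      rw [hv]
    | mul t₁ t₂ =>
      have := length_two_le t₁ t₂
      simp only [varList] at hv
      rw [← hv] at this
      simp at this
  | mul s₁ s₂ ih₁ ih₂ =>
    intro t hv he
    cases t with
    | of b =>
      have := length_two_le s₁ s₂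
      simp only [varList] at hv
      rw [hv] at this
      simp at this
    | mul t₁ t₂ =>
      simp only [varList] at hv
      have he' : evalWith (fun a b => a * b) f s₁ = evalWith (fun a b => a * b) f t₁ ∧
          evalWith (fun a b => a * b) f s₂ = evalWith (fun a b => a * b) f t₂ := by
        change FreeMagma.mul _ _ = FreeMagma.mul _ _ at he
        injection he with e1 e2
        exact ⟨e1, e2⟩
      have h1 : varList s₁ = varList t₁ := by
        apply prefix_eq_of_sum (fun a => leafCount (f a)) (fun a => leafCount_pos _) _ _ _ _ hv
        rw [← leafCount_evalWith, ← leafCount_evalWith]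
        exact congrArg leafCount he'.1
      have h2 : varList s₂ = varList t₂ := by
        rw [h1] at hv
        exact List.append_cancel_left hv
      rw [ih₁ t₁ h1 he'.1, ih₂ t₂ h2 he'.2]

/-- The free groupoid (free magma) on one generator is
`k`-antiassociative for every `k ≥ 3`: any two distinct ordered terms `s` and `t` on
`x₁, …, x_k` satisfy `s(f₁,…,f_k) ≠ t(f₁,…,f_k)` for all elements `f₁, …, f_k` of the
free magma on one generator. -/
theorem freeMagma_kAntiassociative (k : ℕ) (hk : 3 ≤ k)
    (s t : FreeMagma (Fin k)) (hs : IsOrderedTerm s) (ht : IsOrderedTerm t) (hst : s ≠ t) :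
    ∀ f : Fin k → FreeMagma Unit,
      evalWith (fun a b => a * b) f s ≠ evalWith (fun a b => a * b) f t := by
  intro f he
  exact hst (eq_of_evalWith_eq f s t (hs.trans ht.symm) he)
end

section
/- The groupoid terms s = (x ⋆ y) ⋆ (z ⋆ y) and t = z ⋆ ((y ⋆ y) ⋆ (x ⋆ x)) cannot be unified: there are no elements f_x, f_y, f_z of the free magma on one generator such that substituting f_x, f_y, f_z for x, y, z makes s and t equal, i.e., (f_x ⋆ f_y) ⋆ (f_z ⋆ f_y) ≠ f_z ⋆ ((f_y ⋆ f_y) ⋆ (f_x ⋆ f_x)) for all such f_x, f_y, f_z. -/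
/-- The groupoid terms `s = (x ⋆ y) ⋆ (z ⋆ y)` and
`t = z ⋆ ((y ⋆ y) ⋆ (x ⋆ x))` cannot be unified: there are no elements
`f_x, f_y, f_z` of the free magma on one generator with
`(f_x ⋆ f_y) ⋆ (f_z ⋆ f_y) = f_z ⋆ ((f_y ⋆ f_y) ⋆ (f_x ⋆ f_x))`. -/
theorem not_unifiable :
    ∀ fx fy fz : FreeMagma Unit,
      (fx * fy) * (fz * fy) ≠ fz * ((fy * fy) * (fx * fx)) := by
  intro x y z h
  have inj : ∀ a b c d : FreeMagma Unit, a * b = c * d → a = c ∧ b = d := by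
    intro a b c d h
    cases h
    exact ⟨rfl, rfl⟩
  obtain ⟨h1, h2⟩ := inj _ _ _ _ h
  obtain ⟨h3, h4⟩ := inj _ _ _ _ h2
  obtain ⟨h5, -⟩ := inj _ _ _ _ (h1.trans h3)
  have h6 := congrArg FreeMagma.length h4
  rw [h5] at h6
  have h7 : (y * y).length = y.length + y.length := rfl
  have h8 := FreeMagma.length_pos y
  omega
end
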